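/- Suppose A is a finite-dimensional unital associative F-algebra. Let E be the unital F-subalgebra of A generated by all idempotent elements of A, let I be the two-sided ideal of A generated by all commutators [p, a] = p a − a p with p an idempotent of A and a ∈ A, and let R be the Jacobson radical of A. Then the following are equivalent: (1) A is zero product determined; (2) A/R is zero product determined and R ⊆ I; (3) A/R is zero product determined and every 1-dimensional (over F) A-module S satisfies Ext_A^1(S, S) = 0 (equivalently, every short exact sequence of A-modules 0 → S → X → S → 0 splits); (4) A = E. -/

import Mathlib

/-- A unital associative `F`-algebra `A` is *zero product determined* (zpd) if every
`F`-bilinear map `f : A × A → F` vanishing on pairs with zero product is of the form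
`f(x, y) = Φ(xy)` for some linear `Φ`. -/
def IsZpd (F A : Type*) [Field F] [Ring A] [Algebra F A] : Prop :=
  ∀ f : A →ₗ[F] A →ₗ[F] F,
    (∀ a b : A, a * b = 0 → f a b = 0) →
    ∃ Φ : A →ₗ[F] F, ∀ x y : A, f x y = Φ (x * y)
/-- The two-sided ideal of `A` generated by all commutators `[p, a] = p*a - a*p` with
`p` an idempotent of `A` and `a ∈ A`. -/
def commutatorIdeal (A : Type*) [Ring A] : TwoSidedIdeal A :=
  TwoSidedIdeal.span {c : A | ∃ p a : A, IsIdempotentElem p ∧ c = p * a - a * p}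

universe u

/-!
Let `E` be the subalgebra generated by the idempotents, `I` the ideal generated by their commutators
and `R` the Jacobson radical of `A`. One always has `I ≤ E`, and idempotents are central modulo `I`.
If an idempotent `e` is not trivial modulo an ideal `J ≥ I`, then `A / J` embeds into the product of
its proper quotients by `{a | a e ∈ J}` and `{a | a (1 - e) ∈ J}`. By Noetherian induction,
questions about `A / I` reduce to those `A / J` in which every idempotent of `A` becomes `0` or `1`.
By Fitting's decomposition such an `A / J` is local or zero, and a local algebra is zero product
determined only if it is `F` itself: for functionals `l` vanishing on the non-units and `m`
arbitrary, `(x, y) ↦ l x * m y` kills zero products. Hence `A = E` as soon as `A / I` is zero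
product determined, and `R ≤ I` if `A` is.

If self-extensions of one-dimensional modules split, the kernel `M` of any character `A → F`
satisfies `M * M = M`, for otherwise some `K` of codimension one in `M` contains `M * M` and `A / K`
is a non-split extension of `A / M` by itself. Applied to `M = J ⊔ R`, Nakayama's lemma gives
`R ≤ J`, hence `R ≤ I`.
-/

section ZeroProductDetermined

variable {F A B : Type*} [Field F] [Ring A] [Algebra F A] [Ring B] [Algebra F B]

theorem IsZpd.of_surjective (h : IsZpd F A) (π : A →ₐ[F] B) (hπ : Function.Surjective π) :
    IsZpd F B := by
  intro f hf
  obtain ⟨Φ, hΦ⟩ := h (f.compl₁₂ π.toLinearMap π.toLinearMap) fun a b hab =>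
    hf (π a) (π b) (by rw [← map_mul, hab, map_zero])
  replace hΦ : ∀ a b, f (π a) (π b) = Φ (a * b) := hΦ
  refine ⟨f.flip 1, hπ.forall₂.2 fun a b => ?_⟩
  calc f (π a) (π b) = Φ (a * b * 1) := by rw [hΦ, mul_one]
    _ = f (π a * π b) 1 := by rw [← hΦ, map_mul, map_one]

theorem IsZpd.quotient (h : IsZpd F A) (I : Ideal A) [I.IsTwoSided] : IsZpd F (A ⧸ I) :=
  h.of_surjective (Ideal.Quotient.mkₐ F I) (Ideal.Quotient.mkₐ_surjective F I)

theorem IsZpd.quotient_of_le {I J : Ideal A} [I.IsTwoSided] [J.IsTwoSided] (h : IsZpd F (A ⧸ I))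
    (hIJ : I ≤ J) : IsZpd F (A ⧸ J) :=
  h.of_surjective (Ideal.Quotient.factorₐ F hIJ) (Ideal.Quotient.factor_surjective hIJ)

theorem exists_linearMap_one_ne_zero_of_isLocalRing (F A : Type*) [Field F] [Ring A] [Algebra F A]
    [IsLocalRing A] : ∃ l : A →ₗ[F] F, l 1 ≠ 0 ∧ ∀ x, ¬IsUnit x → l x = 0 := by
  let N : Submodule F A :=
    { carrier := nonunits A
      zero_mem' := not_isUnit_zero
      add_mem' := IsLocalRing.nonunits_add
      smul_mem' := fun c x hx h => by
        rw [Algebra.smul_def, (Algebra.commute_algebraMap_left c x).isUnit_mul_iff] at h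
        exact hx h.2 }
  obtain ⟨l, hl, hlN⟩ := N.exists_le_ker_of_notMem (v := 1) fun h => h isUnit_one
  exact ⟨l, hl, fun x hx => hlN hx⟩

theorem IsZpd.surjective_algebraMap [IsLocalRing A] (h : IsZpd F A) :
    Function.Surjective (algebraMap F A) := by
  obtain ⟨l, hl, hlN⟩ := exists_linearMap_one_ne_zero_of_isLocalRing F A
  intro a
  suffices l 1 • a = l a • 1 from
    ⟨(l 1)⁻¹ * l a, by rw [Algebra.algebraMap_eq_smul_one, mul_smul, ← this, inv_smul_smul₀ hl]⟩
  rw [← sub_eq_zero, ← Module.forall_dual_apply_eq_zero_iff F]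
  intro m
  obtain ⟨Φ, hΦ⟩ := h (l.smulRight m) fun x y hxy => by
    change l x * m y = 0
    by_cases hx : IsUnit x
    · rw [hx.mul_right_eq_zero.1 hxy, map_zero, mul_zero]
    · rw [hlN x hx, zero_mul]
  replace hΦ : ∀ x y, l x * m y = Φ (x * y) := hΦ
  rw [map_sub, map_smul, map_smul, smul_eq_mul, smul_eq_mul, hΦ, hΦ, one_mul, mul_one, sub_self]

end ZeroProductDetermined

section IdempotentSubalgebra

/-- The subalgebra `E` of `A` generated by all idempotents. -/
def idempotentSubalgebra (F A : Type*) [Field F] [Ring A] [Algebra F A] : Subalgebra F A :=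
  Algebra.adjoin F {x : A | IsIdempotentElem x}

variable {F A : Type*} [Field F] [Ring A] [Algebra F A]

theorem isZpd_of_idempotentSubalgebra_eq_top (h : idempotentSubalgebra F A = ⊤) : IsZpd F A := by
  intro f hf
  have balanced : ∀ z x y, f (x * z) y = f x (z * y) := fun z => by
    have hz : z ∈ idempotentSubalgebra F A := h ▸ Algebra.mem_top
    induction hz using Algebra.adjoin_induction with
    | mem e he =>
      intro x y
      have h₁ : f (x * e) (y - e * y) = 0 := hf _ _ <| by
        rw [mul_assoc, mul_sub, ← mul_assoc e e, he.eq, sub_self, mul_zero]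
      have h₂ : f (x - x * e) (e * y) = 0 := hf _ _ <| by
        rw [sub_mul, mul_assoc, ← mul_assoc e e, he.eq, sub_self]
      rw [map_sub, sub_eq_zero] at h₁
      rw [map_sub, LinearMap.sub_apply, sub_eq_zero] at h₂
      rw [h₁, h₂]
    | algebraMap c => simp [Algebra.algebraMap_eq_smul_one]
    | add a b _ _ ha hb => simp [mul_add, add_mul, ha, hb]
    | mul a b _ _ ha hb => intro x y; rw [← mul_assoc, hb, ha, mul_assoc]
  exact ⟨f 1, fun x y => by rw [← balanced, one_mul]⟩

theorem mem_idempotentSubalgebra {e : A} (he : IsIdempotentElem e) :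
    e ∈ idempotentSubalgebra F A :=
  Algebra.subset_adjoin he

theorem mul_mul_one_sub_mem_idempotentSubalgebra {e : A} (he : IsIdempotentElem e) (a : A) :
    e * a * (1 - e) ∈ idempotentSubalgebra F A := by
  have h : IsIdempotentElem (e + e * a * (1 - e)) := by
    calc (e + e * a * (1 - e)) * (e + e * a * (1 - e))
        = e * e + e * e * a * (1 - e) + e * a * ((1 - e) * e) * (1 + a * (1 - e)) := by noncomm_ring
      _ = e + e * a * (1 - e) := by
        rw [he.eq, he.one_sub_mul_self, mul_zero, zero_mul, add_zero]
  simpa only [add_sub_cancel_left] using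
    sub_mem (mem_idempotentSubalgebra h) (mem_idempotentSubalgebra (F := F) he)

theorem lie_mem_idempotentSubalgebra {e : A} (he : IsIdempotentElem e) (a : A) :
    ⁅e, a⁆ ∈ idempotentSubalgebra F A := by
  have h : ⁅e, a⁆ = e * a * (1 - e) - (1 - e) * a * (1 - (1 - e)) := by
    rw [Ring.lie_def]
    noncomm_ring
  rw [h]
  exact sub_mem (mul_mul_one_sub_mem_idempotentSubalgebra he a)
    (mul_mul_one_sub_mem_idempotentSubalgebra he.one_sub a)

theorem lie_mul_eq_lie_mul_add_mul_lie (x y z : A) : ⁅x, y * z⁆ = ⁅x, y⁆ * z + y * ⁅x, z⁆ := by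
  simp only [Ring.lie_def]
  noncomm_ring

theorem lie_lie_lie_of_isIdempotentElem {e : A} (he : IsIdempotentElem e) (a : A) :
    ⁅e, ⁅e, ⁅e, a⁆⁆⁆ = ⁅e, a⁆ := by
  simp only [Ring.lie_def, mul_sub, sub_mul, mul_assoc, he.eq]
  simp only [← mul_assoc, he.eq]
  noncomm_ring

-- As `⁅e, ·⁆` is a derivation equal to its own cube, `x ⁅e, a⁆` is a combination of commutators
-- with `e` and products of such.
theorem mul_lie_mem_idempotentSubalgebra {e : A} (he : IsIdempotentElem e) (x a : A) :
    x * ⁅e, a⁆ ∈ idempotentSubalgebra F A := by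
  have h : x * ⁅e, a⁆ = ⁅e, x * ⁅e, ⁅e, a⁆⁆⁆ - ⁅e, x⁆ * ⁅e, ⁅e, a⁆⁆ := by
    rw [lie_mul_eq_lie_mul_add_mul_lie, add_sub_cancel_left, lie_lie_lie_of_isIdempotentElem he]
  rw [h]
  exact sub_mem (lie_mem_idempotentSubalgebra he _)
    (mul_mem (lie_mem_idempotentSubalgebra he _) (lie_mem_idempotentSubalgebra he _))

theorem mul_lie_mul_mem_idempotentSubalgebra {e : A} (he : IsIdempotentElem e) (x a y : A) :
    x * ⁅e, a⁆ * y ∈ idempotentSubalgebra F A := by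
  have h : x * ⁅e, a⁆ * y = x * ⁅e, a * y⁆ - x * a * ⁅e, y⁆ := by
    rw [lie_mul_eq_lie_mul_add_mul_lie]
    noncomm_ring
  rw [h]
  exact sub_mem (mul_lie_mem_idempotentSubalgebra he _ _) (mul_lie_mem_idempotentSubalgebra he _ _)

theorem mem_idempotentSubalgebra_of_mem_commutatorIdeal {x : A} (hx : x ∈ commutatorIdeal A) :
    x ∈ idempotentSubalgebra F A := by
  rw [commutatorIdeal, TwoSidedIdeal.mem_span_iff_mem_addSubgroup_closure] at hx
  refine (AddSubgroup.closure_le (idempotentSubalgebra F A).toSubring.toAddSubgroup).2 ?_ hx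
  rintro _ ⟨_, ⟨x, -, _, ⟨e, a, he, rfl⟩, rfl⟩, y, -, rfl⟩
  exact mul_lie_mul_mem_idempotentSubalgebra he x a y

theorem lie_mem_commutatorIdeal {e : A} (he : IsIdempotentElem e) (a : A) :
    ⁅e, a⁆ ∈ commutatorIdeal A :=
  TwoSidedIdeal.subset_span ⟨e, a, he, rfl⟩

end IdempotentSubalgebra

section TrivialIdempotents

variable {A : Type*} [Ring A]

/-- Every idempotent of `A` is congruent to `0` or `1` modulo `J`. As idempotents need not be lifted
from `A / J`, this only mentions idempotents of `A` itself. -/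
def TrivialIdempotentsModulo (J : Ideal A) : Prop :=
  ∀ e : A, IsIdempotentElem e → e ∈ J ∨ 1 - e ∈ J

theorem TrivialIdempotentsModulo.mono {J K : Ideal A} (h : TrivialIdempotentsModulo J)
    (hJK : J ≤ K) : TrivialIdempotentsModulo K :=
  fun e he => (h e he).imp (@hJK e) (@hJK (1 - e))

theorem isTwoSided_colon_singleton {J : Ideal A} [J.IsTwoSided] {e : A}
    (he : ∀ a, ⁅e, a⁆ ∈ J) : (J.colon {e}).IsTwoSided where
  mul_mem_of_left {a} b ha := by
    rw [Submodule.mem_colon_singleton, smul_eq_mul] at ha ⊢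
    have h : a * b * e = a * e * b - a * ⁅e, b⁆ := by
      rw [Ring.lie_def]
      noncomm_ring
    rw [h]
    exact sub_mem (J.mul_mem_right b ha) (J.mul_mem_left a (he b))

theorem lt_colon_singleton {J : Ideal A} [J.IsTwoSided] {e : A} (he : IsIdempotentElem e)
    (h : 1 - e ∉ J) : J < J.colon {e} := by
  refine SetLike.lt_iff_le_and_exists.2 ⟨Ideal.le_colon, 1 - e, ?_, h⟩
  rw [Submodule.mem_colon_singleton, smul_eq_mul, he.one_sub_mul_self]
  exact zero_mem J

theorem commutatorIdeal_induction [IsNoetherianRing A] {Q : Ideal A → Prop}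
    (trivial : ∀ (J : Ideal A) [J.IsTwoSided], (commutatorIdeal A).asIdeal ≤ J →
      TrivialIdempotentsModulo J → Q J)
    (split : ∀ (J : Ideal A) (e : A), IsIdempotentElem e → Q (J.colon {e}) →
      Q (J.colon {1 - e}) → Q J) :
    Q (commutatorIdeal A).asIdeal := by
  suffices ∀ J : Ideal A, J.IsTwoSided → (commutatorIdeal A).asIdeal ≤ J → Q J from
    this _ inferInstance le_rfl
  intro J
  induction J using IsNoetherian.induction with | _ J ih
  intro _ hJ
  by_cases hJt : TrivialIdempotentsModulo J
  · exact trivial J hJ hJt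
  have descend : ∀ e, IsIdempotentElem e → 1 - e ∉ J → Q (J.colon {e}) := fun e he h =>
    ih _ (lt_colon_singleton he h)
      (isTwoSided_colon_singleton fun a => hJ (by simpa using lie_mem_commutatorIdeal he a))
      (hJ.trans Ideal.le_colon)
  simp only [TrivialIdempotentsModulo, not_forall, not_or] at hJt
  obtain ⟨e, he, heJ, heJ'⟩ := hJt
  exact split J e he (descend e he heJ')
    (descend (1 - e) he.one_sub (by rwa [sub_sub_cancel]))

theorem le_commutatorIdeal_of_forall_trivialIdempotentsModulo [IsNoetherianRing A] {K : Ideal A}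
    (h : ∀ (J : Ideal A) [J.IsTwoSided], (commutatorIdeal A).asIdeal ≤ J →
      TrivialIdempotentsModulo J → K ≤ J) :
    K ≤ (commutatorIdeal A).asIdeal := by
  refine commutatorIdeal_induction (Q := (K ≤ ·)) h fun J e _ h₁ h₂ x hx => ?_
  have hxe : x * e ∈ J := Submodule.mem_colon_singleton.1 (h₁ hx)
  have hxe' : x * (1 - e) ∈ J := Submodule.mem_colon_singleton.1 (h₂ hx)
  rw [← mul_one x, ← add_sub_cancel e 1, mul_add]
  exact add_mem hxe hxe'

end TrivialIdempotents

section Fitting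

open Polynomial in
theorem exists_isIdempotentElem_pow_mul_eq_zero (F : Type*) {A : Type*} [Field F] [Ring A]
    [Algebra F A] {a : A} (ha : IsIntegral F a) :
    ∃ (e b : A) (n : ℕ), IsIdempotentElem e ∧ a ^ n * e = 0 ∧ a * b = 1 - e ∧ b * a = 1 - e := by
  obtain ⟨n, r, hr, hp⟩ :=
    WfDvdMonoid.max_power_factor (minpoly.ne_zero ha) (irreducible_X (R := F))
  obtain ⟨u, v, huv⟩ : IsCoprime r (X ^ (n + 1)) :=
    (irreducible_X.coprime_iff_not_dvd.2 hr).symm.pow_right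
  have hzero : aeval a (X ^ n * r) = 0 := by rw [← hp, minpoly.aeval]
  have hsum : aeval a (v * X ^ n * X) = 1 - aeval a (u * r) := by
    rw [eq_sub_iff_add_eq', ← map_add, mul_assoc, ← pow_succ, huv, map_one]
  refine ⟨aeval a (u * r), aeval a (v * X ^ n), n, ?_, ?_, ?_, ?_⟩
  · rw [isIdempotentElem_iff_mul_one_sub_self, ← hsum, ← map_mul,
      show u * r * (v * X ^ n * X) = u * v * X * (X ^ n * r) by ring, map_mul, hzero, mul_zero]
  · rw [← aeval_X_pow (R := F), ← map_mul, mul_left_comm, map_mul, hzero, mul_zero]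
  · rw [← hsum, mul_comm (v * X ^ n), map_mul _ X, aeval_X]
  · rw [← hsum, map_mul _ _ X, aeval_X]

theorem isLocalRing_of_forall_isIdempotentElem (F : Type*) {A B : Type*} [Field F] [Ring A]
    [Algebra F A] [Algebra.IsIntegral F A] [Ring B] [Nontrivial B] (π : A →+* B)
    (hπ : Function.Surjective π) (h : ∀ e, IsIdempotentElem e → π e = 0 ∨ π e = 1) :
    IsLocalRing B := by
  refine .of_isUnit_or_isUnit_one_sub_self (hπ.forall.2 fun a => ?_)
  obtain ⟨e, b, n, he, hn, hab, hba⟩ :=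
    exists_isIdempotentElem_pow_mul_eq_zero F (Algebra.IsIntegral.isIntegral (R := F) a)
  rcases h e he with he₀ | he₁
  · left
    exact ⟨⟨π a, π b, by rw [← map_mul, hab, map_sub, he₀, map_one, sub_zero],
      by rw [← map_mul, hba, map_sub, he₀, map_one, sub_zero]⟩, rfl⟩
  · right
    have : IsNilpotent (π a) :=
      ⟨n, by rw [← mul_one (π a ^ n), ← he₁, ← map_pow, ← map_mul, hn, map_zero]⟩
    exact this.isUnit_one_sub

variable {F A : Type*} [Field F] [Ring A] [Algebra F A]

theorem IsZpd.surjective_algebraMap_quotient [Algebra.IsIntegral F A] {J : Ideal A} [J.IsTwoSided]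
    (hz : IsZpd F (A ⧸ J)) (hJ : TrivialIdempotentsModulo J) :
    Function.Surjective (algebraMap F (A ⧸ J)) := by
  rcases subsingleton_or_nontrivial (A ⧸ J) with _ | _
  · exact Function.surjective_to_subsingleton _
  have : IsLocalRing (A ⧸ J) :=
    isLocalRing_of_forall_isIdempotentElem F (Ideal.Quotient.mk J) Ideal.Quotient.mk_surjective
      fun e he => (hJ e he).imp Ideal.Quotient.eq_zero_iff_mem.2 fun h =>
        (Ideal.Quotient.eq.2 h).symm
  exact hz.surjective_algebraMap

theorem isMaximal_of_surjective_algebraMap_quotient {J : Ideal A} [J.IsTwoSided] (hJ : J ≠ ⊤)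
    (h : Function.Surjective (algebraMap F (A ⧸ J))) : J.IsMaximal := by
  refine Ideal.isMaximal_iff.2 ⟨J.ne_top_iff_one.1 hJ, fun K x hJK hxJ hxK => ?_⟩
  obtain ⟨c, hc⟩ := h (Ideal.Quotient.mk J x)
  have hcx : algebraMap F A c - x ∈ J := Ideal.Quotient.eq.1 hc
  have hc₀ : c ≠ 0 := by
    rintro rfl
    exact hxJ (by simpa using hcx)
  have hcK : algebraMap F A c ∈ K := by simpa using add_mem (hJK hcx) hxK
  simpa [← map_mul, hc₀] using K.mul_mem_left (algebraMap F A c⁻¹) hcK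

theorem idempotentSubalgebra_eq_top_of_isZpd_quotient [IsNoetherianRing A]
    [Algebra.IsIntegral F A] (h : IsZpd F (A ⧸ (commutatorIdeal A).asIdeal)) :
    idempotentSubalgebra F A = ⊤ := by
  suffices ∀ a, ∃ s ∈ idempotentSubalgebra F A, a - s ∈ (commutatorIdeal A).asIdeal by
    refine Algebra.eq_top_iff.2 fun a => ?_
    obtain ⟨s, hs, has⟩ := this a
    rw [TwoSidedIdeal.mem_asIdeal] at has
    simpa only [sub_add_cancel] using
      add_mem (mem_idempotentSubalgebra_of_mem_commutatorIdeal has) hs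
  refine commutatorIdeal_induction (Q := fun J => ∀ a, ∃ s ∈ idempotentSubalgebra F A, a - s ∈ J)
    (fun J _ hJ hJt a => ?_) (fun J e he h₁ h₂ a => ?_)
  · obtain ⟨c, hc⟩ := (h.quotient_of_le hJ).surjective_algebraMap_quotient hJt
      (Ideal.Quotient.mk J a)
    exact ⟨algebraMap F A c, algebraMap_mem _ c, Ideal.Quotient.eq.1 hc.symm⟩
  · obtain ⟨s, hs, has⟩ := h₁ a
    obtain ⟨t, ht, hat⟩ := h₂ a
    rw [Submodule.mem_colon_singleton, smul_eq_mul] at has hat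
    have he' := mem_idempotentSubalgebra (F := F) he
    refine ⟨s * e + t * (1 - e),
      add_mem (mul_mem hs he') (mul_mem ht (sub_mem (one_mem _) he')), ?_⟩
    have hglue : a - (s * e + t * (1 - e)) = (a - s) * e + (a - t) * (1 - e) := by noncomm_ring
    rw [hglue]
    exact add_mem has hat

theorem IsZpd.jacobson_le_commutatorIdeal [IsNoetherianRing A] [Algebra.IsIntegral F A]
    (h : IsZpd F A) : Ideal.jacobson ⊥ ≤ (commutatorIdeal A).asIdeal := by
  refine le_commutatorIdeal_of_forall_trivialIdempotentsModulo fun J _ _ hJt => ?_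
  by_cases hJ : J = ⊤
  · exact hJ ▸ le_top
  have := isMaximal_of_surjective_algebraMap_quotient hJ
    ((h.quotient J).surjective_algebraMap_quotient hJt)
  rw [Ideal.jacobson_bot]
  exact Ring.jacobson_le_of_isMaximal J

end Fitting

section SelfExtensions

/-- The vanishing of `Ext¹_A(S, S)`, expressed through extensions: every short exact sequence
`0 → S → X → S → 0` of `A`-modules splits. -/
def SelfExtensionsSplit (A : Type*) (S : Type u) [Ring A] [AddCommGroup S] [Module A S] : Prop :=
  ∀ (X : Type u) [AddCommGroup X] [Module A X] (i : S →ₗ[A] X) (p : X →ₗ[A] S),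
    Function.Injective i → Function.Surjective p → LinearMap.range i = LinearMap.ker p →
    ∃ r : X →ₗ[A] S, r.comp i = LinearMap.id

theorem smul_eq_zero_or_smul_eq_self_of_finrank_eq_one {F A S : Type*} [Field F] [Ring A]
    [Algebra F A] [AddCommGroup S] [Module F S] [Module A S] [IsScalarTower F A S]
    (hS : Module.finrank F S = 1) {e : A} (he : IsIdempotentElem e) :
    (∀ s : S, e • s = 0) ∨ ∀ s : S, e • s = s := by
  obtain ⟨c, hc, -⟩ :=
    LinearMap.existsUnique_eq_smul_id_of_finrank_eq_one hS (Algebra.lsmul F F S e)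
  replace hc : ∀ s : S, e • s = c • s := LinearMap.congr_fun hc
  obtain ⟨s, hs, -⟩ := finrank_eq_one_iff'.1 hS
  have hcc : IsIdempotentElem c := smul_left_injective F hs <| by
    simp only [mul_smul]
    rw [← hc s, smul_comm, ← hc, ← mul_smul, he.eq]
  refine (IsIdempotentElem.iff_eq_zero_or_one.1 hcc).imp (fun h s => ?_) fun h s => ?_
  · rw [hc, h, zero_smul]
  · rw [hc, h, one_smul]

theorem exists_smul_eq_smul_of_idempotentSubalgebra_eq_top {F A X : Type*} [Field F] [Ring A]
    [Algebra F A] (h : idempotentSubalgebra F A = ⊤) [AddCommGroup X] [Module F X] [Module A X]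
    [IsScalarTower F A X]
    (hX : ∀ e : A, IsIdempotentElem e → (∀ x : X, e • x = 0) ∨ ∀ x : X, e • x = x) (a : A) :
    ∃ c : F, ∀ x : X, a • x = c • x := by
  have ha : a ∈ idempotentSubalgebra F A := h ▸ Algebra.mem_top
  induction ha using Algebra.adjoin_induction with
  | mem e he =>
    exact (hX e he).elim (fun h₀ => ⟨0, fun x => by rw [h₀, zero_smul]⟩)
      fun h₁ => ⟨1, fun x => by rw [h₁, one_smul]⟩
  | algebraMap c => exact ⟨c, algebraMap_smul A c⟩
  | add a b _ _ ha hb =>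
    obtain ⟨c, hc⟩ := ha
    obtain ⟨d, hd⟩ := hb
    exact ⟨c + d, fun x => by rw [add_smul, add_smul, hc, hd]⟩
  | mul a b _ _ ha hb =>
    obtain ⟨c, hc⟩ := ha
    obtain ⟨d, hd⟩ := hb
    exact ⟨c * d, fun x => by rw [mul_smul, mul_smul, hd, hc]⟩

theorem selfExtensionsSplit_of_idempotentSubalgebra_eq_top {F A : Type*} {S : Type u} [Field F]
    [Ring A] [Algebra F A] (h : idempotentSubalgebra F A = ⊤) [AddCommGroup S] [Module F S]
    [Module A S] [IsScalarTower F A S] (hS : Module.finrank F S = 1) :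
    SelfExtensionsSplit A S := by
  intro X _ _ i p hi _ hip
  let _ : Module F X := Module.compHom X (algebraMap F A)
  have : IsScalarTower F A X := .of_algebraMap_smul fun _ _ => rfl
  have killed : ∀ e : A, IsIdempotentElem e → (∀ s : S, e • s = 0) → ∀ x : X, e • x = 0 := by
    intro e he heS x
    obtain ⟨s, hs⟩ : e • x ∈ LinearMap.range i := by rw [hip, LinearMap.mem_ker, map_smul, heS]
    rw [← he.eq, mul_smul, ← hs, ← map_smul, heS, map_zero]
  have scalar := exists_smul_eq_smul_of_idempotentSubalgebra_eq_top (X := X) h fun e he =>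
    (smul_eq_zero_or_smul_eq_self_of_finrank_eq_one hS he).imp (killed e he) fun heS x => by
      rw [eq_comm, ← sub_eq_zero]
      simpa only [sub_smul, one_smul] using
        killed (1 - e) he.one_sub (fun s => by rw [sub_smul, one_smul, heS, sub_self]) x
  obtain ⟨r, hr⟩ :=
    (i.restrictScalars F).exists_leftInverse_of_injective (LinearMap.ker_eq_bot.2 hi)
  replace hr : ∀ s, r (i s) = s := LinearMap.congr_fun hr
  have hrA : ∀ (a : A) (x : X), r (a • x) = a • r x := fun a x => by
    obtain ⟨c, hc⟩ := scalar a
    have haS : ∀ s : S, a • s = c • s := fun s => hi <| by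
      rw [map_smul, hc]
      exact ((i.restrictScalars F).map_smul c s).symm
    rw [hc, map_smul, haS]
  exact ⟨{ r with map_smul' := hrA }, LinearMap.ext hr⟩

theorem not_selfExtensionsSplit_quotient {A : Type u} [Ring A] {M K : Ideal A} [M.IsTwoSided]
    {y : A} (hM : M ≠ ⊤) (hKy : K ⊔ Ideal.span {y} = M) (hy : ∀ a, a * y ∈ K ↔ a ∈ M) :
    ¬SelfExtensionsSplit A (A ⧸ M) := by
  intro h
  have hKM : K ≤ M := hKy ▸ le_sup_left
  have hyM : y ∈ M := hKy ▸ Ideal.mem_sup_right (Ideal.mem_span_singleton_self y)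
  let g : A →ₗ[A] A ⧸ K := K.mkQ ∘ₗ LinearMap.toSpanSingleton A A y
  have hker : LinearMap.ker g = M := by
    ext a
    exact (Submodule.Quotient.mk_eq_zero K).trans (hy a)
  let i : (A ⧸ M) →ₗ[A] A ⧸ K := M.liftQ g hker.ge
  let p : (A ⧸ K) →ₗ[A] A ⧸ M := Submodule.factor hKM
  have hi : Function.Injective i :=
    LinearMap.ker_eq_bot.1 (Submodule.ker_liftQ_eq_bot _ _ _ hker.le)
  have hp : Function.Surjective p := Submodule.factor_surjective hKM
  have hip : LinearMap.range i = LinearMap.ker p := by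
    refine le_antisymm ?_ fun w hw => ?_
    · rintro _ ⟨v, rfl⟩
      obtain ⟨a, rfl⟩ := M.mkQ_surjective v
      exact (Submodule.Quotient.mk_eq_zero M).2 (M.mul_mem_left a hyM)
    · obtain ⟨a, rfl⟩ := K.mkQ_surjective w
      have ha : a ∈ K ⊔ Ideal.span {y} := hKy ▸ (Submodule.Quotient.mk_eq_zero M).1 hw
      obtain ⟨k, hk, b, hb, rfl⟩ := Submodule.mem_sup.1 ha
      obtain ⟨c, rfl⟩ := Ideal.mem_span_singleton'.1 hb
      refine ⟨M.mkQ c, (Submodule.Quotient.eq K).2 ?_⟩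
      simpa using hk
  obtain ⟨r, hr⟩ := h (A ⧸ K) i p hi hp hip
  obtain ⟨s, hs⟩ := M.mkQ_surjective (r (K.mkQ 1))
  refine hM (M.eq_top_iff_one.2 ((Submodule.Quotient.mk_eq_zero M).1 ?_))
  calc M.mkQ 1 = r (i (M.mkQ 1)) := (LinearMap.congr_fun hr _).symm
    _ = r (y • K.mkQ 1) := by rw [← map_smul, smul_eq_mul, mul_one, ← one_mul y]; rfl
    _ = M.mkQ (y * s) := by rw [map_smul, ← hs, ← map_smul, smul_eq_mul]
    _ = 0 := (Submodule.Quotient.mk_eq_zero M).2 (M.mul_mem_right s hyM)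

theorem exists_sup_span_singleton_eq_and_mul_mem_iff {F A : Type*} [Field F] [Ring A] [Algebra F A]
    {M : Ideal A} [M.IsTwoSided] (hFM : Function.Surjective (algebraMap F (A ⧸ M))) {y : A}
    (hyM : y ∈ M) (hy : y ∉ M * M) :
    ∃ K : Ideal A, K ⊔ Ideal.span {y} = M ∧ ∀ a, a * y ∈ K ↔ a ∈ M := by
  obtain ⟨m, hmy, hm⟩ := ((M * M).restrictScalars F).exists_le_ker_of_notMem hy
  have hmm : ∀ a ∈ M, ∀ b ∈ M, m (a * b) = 0 := fun a ha b hb => hm (Ideal.mul_mem_mul ha hb)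
  have scalar : ∀ a, ∃ c : F, a - algebraMap F A c ∈ M ∧ ∀ b ∈ M, m (a * b) = c * m b := by
    intro a
    obtain ⟨c, hc⟩ := hFM (Ideal.Quotient.mk M a)
    have hac : a - algebraMap F A c ∈ M := Ideal.Quotient.eq.1 hc.symm
    refine ⟨c, hac, fun b hb => ?_⟩
    rw [← sub_eq_zero, ← smul_eq_mul c, ← map_smul, ← map_sub, Algebra.smul_def, ← sub_mul]
    exact hmm _ hac b hb
  let K : Ideal A :=
    { carrier := {a | a ∈ M ∧ m a = 0}
      zero_mem' := ⟨zero_mem M, map_zero m⟩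
      add_mem' := fun ha hb => ⟨add_mem ha.1 hb.1, by rw [map_add, ha.2, hb.2, add_zero]⟩
      smul_mem' := fun a b hb => by
        obtain ⟨c, -, hc⟩ := scalar a
        exact ⟨M.mul_mem_left a hb.1, by rw [smul_eq_mul, hc b hb.1, hb.2, mul_zero]⟩ }
  refine ⟨K, le_antisymm (sup_le (fun a ha => ha.1) ?_) fun x hx => ?_, fun a => ⟨fun ha => ?_,
    fun ha => ⟨M.mul_mem_right y ha, hmm a ha y hyM⟩⟩⟩
  · exact (Ideal.span_singleton_le_iff_mem M).2 hyM
  · have hxK : x - algebraMap F A (m x / m y) * y ∈ K :=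
      ⟨sub_mem hx (M.mul_mem_left _ hyM), by
        rw [← Algebra.smul_def, map_sub, map_smul, smul_eq_mul, div_mul_cancel₀ _ hmy, sub_self]⟩
    exact Submodule.mem_sup.2 ⟨_, hxK, _, Ideal.mul_mem_left _ _ (Ideal.mem_span_singleton_self y),
      sub_add_cancel _ _⟩
  · obtain ⟨c, hac, hc⟩ := scalar a
    have hc₀ : c = 0 := (mul_eq_zero.1 ((hc y hyM).symm.trans ha.2)).resolve_right hmy
    simpa only [hc₀, map_zero, sub_zero] using hac

theorem mul_self_eq_of_selfExtensionsSplit {F : Type*} {A : Type u} [Field F] [Ring A]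
    [Algebra F A] {M : Ideal A} [M.IsTwoSided] (hM : M ≠ ⊤)
    (hFM : Function.Surjective (algebraMap F (A ⧸ M))) (h : SelfExtensionsSplit A (A ⧸ M)) :
    M * M = M := by
  refine Ideal.mul_le_right.antisymm fun y hyM => ?_
  by_contra hy
  obtain ⟨K, hKy, hK⟩ := exists_sup_span_singleton_eq_and_mul_mem_iff hFM hyM hy
  exact not_selfExtensionsSplit_quotient hM hKy hK h

end SelfExtensions

section Radical

theorem le_of_le_sup_jacobson_smul {A X : Type*} [Ring A] [AddCommGroup X] [Module A X]
    {N P : Submodule A X} (hN : N.FG) (h : N ≤ P ⊔ Ring.jacobson A • N) : N ≤ P := by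
  have hmap : N.map P.mkQ ≤ Ring.jacobson A • N.map P.mkQ := by
    calc N.map P.mkQ ≤ (P ⊔ Ring.jacobson A • N).map P.mkQ := Submodule.map_mono h
      _ = Ring.jacobson A • N.map P.mkQ := by
        rw [Submodule.map_sup, Submodule.map_smul'', Submodule.mkQ_map_self, bot_sup_eq]
  have hbot := (hN.map P.mkQ).eq_bot_of_le_jacobson_smul hmap
  rwa [eq_bot_iff, Submodule.map_le_iff_le_comap, ← LinearMap.ker, Submodule.ker_mkQ] at hbot

theorem isTwoSided_sup {A : Type*} [Ring A] (I J : Ideal A) [I.IsTwoSided] [J.IsTwoSided] :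
    (I ⊔ J).IsTwoSided where
  mul_mem_of_left {a} b ha := by
    obtain ⟨x, hx, y, hy, rfl⟩ := Submodule.mem_sup.1 ha
    rw [add_mul]
    exact Submodule.add_mem_sup (I.mul_mem_right b hx) (J.mul_mem_right b hy)

theorem sup_mul_sup_le {A : Type*} [Ring A] (J R : Ideal A) [J.IsTwoSided] :
    (J ⊔ R) * (J ⊔ R) ≤ J ⊔ R * R := by
  rw [Ideal.sup_mul, Ideal.mul_sup R]
  exact sup_le (Ideal.mul_le_left.trans le_sup_left)
    (sup_le_sup_right Ideal.mul_le_right _)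

theorem jacobson_le_commutatorIdeal_of_selfExtensionsSplit {F : Type*} {A : Type u} [Field F]
    [Ring A] [Algebra F A] [IsNoetherianRing A] [Algebra.IsIntegral F A]
    (hz : IsZpd F (A ⧸ Ideal.jacobson (⊥ : Ideal A)))
    (h : ∀ (S : Type u) [AddCommGroup S] [Module F S] [Module A S] [IsScalarTower F A S],
      Module.finrank F S = 1 → SelfExtensionsSplit A S) :
    Ideal.jacobson ⊥ ≤ (commutatorIdeal A).asIdeal := by
  refine le_commutatorIdeal_of_forall_trivialIdempotentsModulo fun J _ _ hJt => ?_
  set R : Ideal A := Ideal.jacobson ⊥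
  have : (J ⊔ R).IsTwoSided := isTwoSided_sup J R
  have hFM := (hz.quotient_of_le (le_sup_right : R ≤ J ⊔ R)).surjective_algebraMap_quotient
    (hJt.mono le_sup_left)
  have hMM : (J ⊔ R) * (J ⊔ R) = J ⊔ R := by
    rcases eq_or_ne (J ⊔ R) ⊤ with hM | hM
    · rw [hM, Ideal.top_mul]
    have : Nontrivial (A ⧸ J ⊔ R) := Ideal.Quotient.nontrivial_iff.2 hM
    refine mul_self_eq_of_selfExtensionsSplit hM hFM (h _ ?_)
    exact finrank_eq_one 1 one_ne_zero fun w => (hFM w).imp fun c hc => by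
      rw [← hc, Algebra.algebraMap_eq_smul_one]
  exact le_of_le_sup_jacobson_smul (IsNoetherian.noetherian R) <| by
    rw [← Ideal.jacobson_bot]
    exact le_sup_right.trans (hMM.ge.trans (sup_mul_sup_le J R))

end Radical

theorem isZpd_quotient_iff_forall_surjective {F : Type*} {A : Type u} [Field F] [Ring A]
    [Algebra F A] {I : Ideal A} [I.IsTwoSided] :
    IsZpd F (A ⧸ I) ↔ ∀ (B : Type u) [Ring B] [Algebra F B] (π : A →ₐ[F] B),
      Function.Surjective π → (∀ a, π a = 0 ↔ a ∈ I) → IsZpd F B := by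
  refine ⟨fun h B _ _ π hπ hker => ?_, fun h => h _ (Ideal.Quotient.mkₐ F I)
    (Ideal.Quotient.mkₐ_surjective F I) fun a => Ideal.Quotient.eq_zero_iff_mem⟩
  exact h.of_surjective (Ideal.Quotient.liftₐ I π fun a => (hker a).2)
    (Ideal.Quotient.lift_surjective_of_surjective I _ hπ)

theorem stmt_17_general (F : Type*) (A : Type u) [Field F] [Ring A] [Algebra F A]
    [IsNoetherianRing A] [Algebra.IsIntegral F A] :
    List.TFAE [
      IsZpd F A,
      IsZpd F (A ⧸ Ideal.jacobson (⊥ : Ideal A)) ∧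
        Ideal.jacobson ⊥ ≤ (commutatorIdeal A).asIdeal,
      IsZpd F (A ⧸ Ideal.jacobson (⊥ : Ideal A)) ∧
        ∀ (S : Type u) [AddCommGroup S] [Module F S] [Module A S] [IsScalarTower F A S],
          Module.finrank F S = 1 → SelfExtensionsSplit A S,
      idempotentSubalgebra F A = ⊤ ] := by
  tfae_have 1 → 2 := fun h => ⟨h.quotient _, h.jacobson_le_commutatorIdeal⟩
  tfae_have 2 → 4 := fun ⟨hz, hle⟩ =>
    idempotentSubalgebra_eq_top_of_isZpd_quotient (hz.quotient_of_le hle)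
  tfae_have 4 → 1 := isZpd_of_idempotentSubalgebra_eq_top
  tfae_have 4 → 3 := fun h => ⟨(isZpd_of_idempotentSubalgebra_eq_top h).quotient _,
    fun _ _ _ _ _ => selfExtensionsSplit_of_idempotentSubalgebra_eq_top h⟩
  tfae_have 3 → 2 := fun ⟨hz, h⟩ =>
    ⟨hz, jacobson_le_commutatorIdeal_of_selfExtensionsSplit hz h⟩
  tfae_finish

/-- for a finite-dimensional algebra `A`, with `E` the subalgebra generated
by idempotents, `I` the ideal generated by commutators of idempotents with arbitrary
elements, and `R` the Jacobson radical, the following are equivalent: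
(1) `A` is zero product determined; (2) `A/R` is zero product determined and `R ⊆ I`;
(3) `A/R` is zero product determined and every 1-dimensional `A`-module `S` has
`Ext¹_A(S,S) = 0` (every short exact sequence `0 → S → X → S → 0` splits); (4) `A = E`.
The quotient algebra `A/R` is represented by a surjective `F`-algebra homomorphism
`π : A → B` whose kernel is exactly `R`. -/
theorem stmt_17 (F : Type*) (A : Type u) [Field F] [Ring A] [Algebra F A]
    [FiniteDimensional F A] :
    List.TFAE [
      -- (1) A is zero product determined
      IsZpd F A,
      -- (2) A/R is zero product determined and R ⊆ I
      (∀ (B : Type u) [Ring B] [Algebra F B] (π : A →ₐ[F] B), Function.Surjective π →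
          (∀ a : A, π a = 0 ↔ a ∈ Ideal.jacobson (⊥ : Ideal A)) → IsZpd F B) ∧
        (↑(Ideal.jacobson (⊥ : Ideal A)) : Set A) ⊆ (commutatorIdeal A : Set A),
      -- (3) A/R is zero product determined and every 1-dimensional A-module S has
      --     Ext¹(S,S) = 0
      (∀ (B : Type u) [Ring B] [Algebra F B] (π : A →ₐ[F] B), Function.Surjective π →
          (∀ a : A, π a = 0 ↔ a ∈ Ideal.jacobson (⊥ : Ideal A)) → IsZpd F B) ∧
        (∀ (S : Type u) [AddCommGroup S] [Module F S] [Module A S] [IsScalarTower F A S],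
          Module.finrank F S = 1 →
          ∀ (X : Type u) [AddCommGroup X] [Module A X] (i : S →ₗ[A] X) (p : X →ₗ[A] S),
            Function.Injective i → Function.Surjective p →
            LinearMap.range i = LinearMap.ker p →
            ∃ r : X →ₗ[A] S, r.comp i = LinearMap.id),
      -- (4) A = E
      Algebra.adjoin F {x : A | IsIdempotentElem x} = ⊤ ] := by
  have : IsNoetherianRing A := isNoetherian_of_tower F inferInstance
  have h := stmt_17_general F A
  rwa [isZpd_quotient_iff_forall_surjective] at h
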